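/- arXiv:2505.18626 — 2 statements merged into one kernel-verified Lean document; each statement's English description precedes it below -/
import Mathlib

section
/- Every regular ω-language F ⊆ X^ω has the Automatic Baire property. -/
open Set MeasureTheory Computability

namespace AutoBaire

/-- The Cantor topology on the space of ω-words over `X`:
the product of the discrete topology on `X`. -/
def cantorTop (X : Type) : TopologicalSpace (ℕ → X) :=
  @Pi.topologicalSpace ℕ (fun _ => X) (fun _ => ⊥)

/-- The Borel σ-algebra of the Cantor space. -/
def cantorBorel (X : Type) : MeasurableSpace (ℕ → X) :=
  @borel (ℕ → X) (cantorTop X)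

variable {X : Type}

/-- Concatenation `w·ξ` of a finite word with an ω-word. -/
def wcat (w : List X) (ξ : ℕ → X) : ℕ → X :=
  Stream'.appendStream' w ξ

/-- The ball (cylinder) `w·X^ω`. -/
def cyl (w : List X) : Set (ℕ → X) := {ξ | ∃ η : ℕ → X, ξ = wcat w η}

/-- The ω-language `W·A` for a language `W` and an ω-language `A`. -/
def catOmega (W : Language X) (A : Set (ℕ → X)) : Set (ℕ → X) :=
  {ξ | ∃ w ∈ W, ∃ η ∈ A, ξ = wcat w η}

/-- `V^ω`: the set of ω-words that are infinite concatenations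
`v₁·v₂·⋯` of non-empty words `vᵢ ∈ V`. -/
def omegaPow (V : Language X) : Set (ℕ → X) :=
  {ξ | ∃ f : ℕ → List X, (∀ i, f i ∈ V ∧ f i ≠ []) ∧
    ∀ k, ξ ∈ cyl (((List.range k).map f).flatten)}

/-- Regular languages: those obtained from finite languages via the operations
union, concatenation and star. -/
inductive IsRegLang : Language X → Prop
  | finite (W : Language X) : (W : Set (List X)).Finite → IsRegLang W
  | union (W V : Language X) : IsRegLang W → IsRegLang V → IsRegLang (W + V)
  | concat (W V : Language X) : IsRegLang W → IsRegLang V → IsRegLang (W * V)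
  | star (W : Language X) : IsRegLang W → IsRegLang (W∗)

/-- Regular ω-languages: finite unions `⋃ᵢ Wᵢ·Vᵢ^ω` with `Wᵢ, Vᵢ` regular. -/
def IsRegOmega (F : Set (ℕ → X)) : Prop :=
  ∃ (n : ℕ) (W V : Fin n → Language X),
    (∀ i, IsRegLang (W i) ∧ IsRegLang (V i)) ∧
    F = ⋃ i, catOmega (W i) (omegaPow (V i))

/-- `X*·w·X^ω`: the set of ω-words containing `w` as an infix. -/
def infixOcc (w : List X) : Set (ℕ → X) :=
  {ξ | ∃ u : List X, ξ ∈ cyl (u ++ w)}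

/-- An ω-word is disjunctive if every finite word occurs in it as an infix. -/
def Disjunctive (ξ : ℕ → X) : Prop := ∀ w : List X, ξ ∈ infixOcc w

/-- Ultimately periodic ω-words: `ξ = w·v·v·v·⋯` with `v ≠ e`. -/
def UltPeriodic (ξ : ℕ → X) : Prop :=
  ∃ (w v : List X) (h : v ≠ []), ξ = wcat w (Stream'.cycle v h)

/-- The Automatic Baire property: `F Δ E ⊆ F'` for some regular open
ω-language `E` and some regular ω-language `F'` of first Baire category. -/
def HasABP (F : Set (ℕ → X)) : Prop :=
  ∃ E F' : Set (ℕ → X),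
    IsRegOmega E ∧ @IsOpen _ (cantorTop X) E ∧
    IsRegOmega F' ∧ @IsMeagre _ (cantorTop X) F' ∧
    symmDiff F E ⊆ F'

/-- The measure is finite and non-null: `0 < μ(X^ω) < ∞`. -/
def FiniteNonNull (μ : @MeasureTheory.Measure (ℕ → X) (cantorBorel X)) : Prop :=
  0 < μ Set.univ ∧ μ Set.univ < ⊤

/-- `supp(μ) = X^ω`: every non-empty open set has positive measure. -/
def FullSupport (μ : @MeasureTheory.Measure (ℕ → X) (cantorBorel X)) : Prop :=
  ∀ U : Set (ℕ → X), @IsOpen _ (cantorTop X) U → U.Nonempty → 0 < μ U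

/-- The balance condition: there is `c > 0` such that for all `w ∈ X*`, `x ∈ X`
either `μ(wx·X^ω) = 0` or `c·μ(w·X^ω) ≤ μ(wx·X^ω)`. -/
def Balanced (μ : @MeasureTheory.Measure (ℕ → X) (cantorBorel X)) : Prop :=
  ∃ c : ENNReal, 0 < c ∧ ∀ (w : List X) (x : X),
    μ (cyl (w ++ [x])) = 0 ∨ c * μ (cyl w) ≤ μ (cyl (w ++ [x]))


section helpers

lemma wcat_append (u v : List X) (ξ : ℕ → X) : wcat (u ++ v) ξ = wcat u (wcat v ξ) :=
  Stream'.append_append_stream u v ξ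

lemma wcat_nil (ξ : ℕ → X) : wcat [] ξ = ξ := rfl

lemma wcat_inj (u : List X) {ξ η : ℕ → X} (h : wcat u ξ = wcat u η) : ξ = η := by
  have h1 := Stream'.drop_append_stream u ξ
  have h2 := Stream'.drop_append_stream u η
  rw [← h1, ← h2]
  exact congrArg (Stream'.drop u.length) h

lemma mem_cyl_nil (ξ : ℕ → X) : ξ ∈ cyl [] := ⟨ξ, rfl⟩

lemma wcat_mem_cyl (u : List X) (ξ : ℕ → X) : wcat u ξ ∈ cyl u := ⟨ξ, rfl⟩

lemma wcat_mem_cyl_append (v u : List X) (ξ : ℕ → X) :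
    wcat v ξ ∈ cyl (v ++ u) ↔ ξ ∈ cyl u := by
  constructor
  · rintro ⟨η, h⟩
    rw [wcat_append] at h
    exact ⟨η, wcat_inj v h⟩
  · rintro ⟨η, rfl⟩
    exact ⟨η, (wcat_append _ _ _).symm⟩

lemma cyl_append {u t : List X} {ξ : ℕ → X} (h : ξ ∈ cyl (u ++ t)) : ξ ∈ cyl u := by
  obtain ⟨η, rfl⟩ := h
  exact ⟨wcat t η, wcat_append _ _ _⟩

lemma exists_split (n : ℕ) (ξ : ℕ → X) : ∃ u η, u.length = n ∧ ξ = wcat u η :=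
  ⟨Stream'.take n ξ, Stream'.drop n ξ, Stream'.length_take n ξ,
    (Stream'.append_take_drop n ξ).symm⟩

lemma cyl_prefix {u t : List X} {ξ : ℕ → X} (hu : ξ ∈ cyl u) (ht : ξ ∈ cyl t)
    (h : u.length ≤ t.length) : ∃ s, t = u ++ s := by
  induction u generalizing t ξ with
  | nil => exact ⟨t, rfl⟩
  | cons a u ih =>
    cases t with
    | nil => simp at h
    | cons b t =>
      obtain ⟨η, rfl⟩ := hu
      obtain ⟨ζ, hζ⟩ := ht
      have h0 : a = b := congrFun hζ 0
      subst h0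
      have h1 : wcat u η = wcat t ζ := wcat_inj [a] hζ
      obtain ⟨s, rfl⟩ := ih (wcat_mem_cyl u η) (h1 ▸ wcat_mem_cyl t ζ) (by simpa using h)
      exact ⟨s, rfl⟩

lemma omegaPow_coind (V : Language X) (R : (ℕ → X) → Prop)
    (hR : ∀ ξ, R ξ → ∃ v ∈ V, v ≠ [] ∧ ∃ ξ', ξ = wcat v ξ' ∧ R ξ') (ξ : ℕ → X) (h : R ξ) :
    ξ ∈ omegaPow V := by
  choose! v hv hv0 g hg hgR using hR
  have hit : ∀ k, R (g^[k] ξ) := by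
    intro k
    induction k with
    | zero => exact h
    | succ k ih => rw [Function.iterate_succ_apply']; exact hgR _ ih
  refine ⟨fun i => v (g^[i] ξ), fun i => ⟨hv _ (hit i), hv0 _ (hit i)⟩, fun k => ?_⟩
  refine ⟨g^[k] ξ, ?_⟩
  induction k with
  | zero => rfl
  | succ k ih =>
    rw [List.range_succ, List.map_append, List.flatten_append, wcat_append,
      Function.iterate_succ_apply']
    simp only [List.map_cons, List.map_nil, List.flatten_cons, List.flatten_nil, List.append_nil]
    rw [← hg _ (hit k)]
    exact ih

lemma omegaPow_cons {V : Language X} {v : List X} (hv : v ∈ V) (hv0 : v ≠ []) {ξ : ℕ → X}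
    (h : ξ ∈ omegaPow V) : wcat v ξ ∈ omegaPow V := by
  obtain ⟨f, hf, hc⟩ := h
  refine ⟨fun i => Nat.casesOn i v f, ?_, ?_⟩
  · rintro (_ | i)
    · exact ⟨hv, hv0⟩
    · exact hf i
  · rintro (_ | k)
    · exact mem_cyl_nil _
    · rw [List.range_succ_eq_map, List.map_cons, List.flatten_cons, List.map_map]
      exact (wcat_mem_cyl_append _ _ _).2 (hc k)

lemma omegaPow_kstar {V : Language X} {x : List X} (hx : x ∈ V∗) {ξ : ℕ → X}
    (h : ξ ∈ omegaPow V) : wcat x ξ ∈ omegaPow V := by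
  obtain ⟨S, rfl, hS⟩ := Language.mem_kstar_iff_exists_nonempty.1 hx
  clear hx
  induction S with
  | nil => exact h
  | cons a S ih =>
    rw [List.flatten_cons, wcat_append]
    exact omegaPow_cons (hS a (by simp)).1 (hS a (by simp)).2
      (ih fun y hy => hS y (by simp [hy]))

lemma omegaPow_prefix {V : Language X} {ξ : ℕ → X} (h : ξ ∈ omegaPow V) {u : List X}
    (hu : ξ ∈ cyl u) : ∃ z, z ≠ [] ∧ u ++ z ∈ V∗ := by
  obtain ⟨f, hf, hc⟩ := h
  have hlen : ∀ k, k ≤ (((List.range k).map f).flatten).length := by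
    intro k
    induction k with
    | zero => simp
    | succ k ih =>
      have := List.length_pos_iff.2 (hf k).2
      rw [List.range_succ, List.map_append, List.flatten_append, List.length_append]
      simp only [List.map_cons, List.map_nil, List.flatten_cons, List.flatten_nil, List.append_nil]
      omega
  have hl := hlen (u.length + 1)
  obtain ⟨z, hz⟩ := cyl_prefix hu (hc (u.length + 1)) (by omega)
  refine ⟨z, ?_, ?_⟩
  · rintro rfl
    rw [hz] at hl
    simp at hl
  · rw [← hz]
    apply Language.join_mem_kstar
    intro y hy
    obtain ⟨i, -, rfl⟩ := List.mem_map.1 hy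
    exact (hf i).1

lemma kstar_uncons {V : Language X} {x : List X} (hx : x ∈ V∗) (h0 : x ≠ []) :
    ∃ v ∈ V, v ≠ [] ∧ ∃ y ∈ V∗, x = v ++ y := by
  obtain ⟨S, rfl, hS⟩ := Language.mem_kstar_iff_exists_nonempty.1 hx
  cases S with
  | nil => simp at h0
  | cons a S =>
    exact ⟨a, (hS a (by simp)).1, (hS a (by simp)).2, S.flatten,
      Language.join_mem_kstar fun y hy => (hS y (by simp [hy])).1, by simp⟩

/-! Finitely many left quotients -/

lemma lq_star_aux {W : Language X} (S : List (List X)) (hS : ∀ y ∈ S, y ∈ W) (u z : List X)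
    (hu : u ≠ []) (h : u ++ z = S.flatten) :
    ∃ x y z1 z2, u = x ++ y ∧ x ∈ W∗ ∧ y ++ z1 ∈ W ∧ z2 ∈ W∗ ∧ z = z1 ++ z2 := by
  induction S generalizing u with
  | nil => simp at h; exact absurd h.1 hu
  | cons w S ih =>
    have hS' : ∀ y ∈ S, y ∈ W := fun y hy => hS y (by simp [hy])
    have hw : w ∈ W := hS w (by simp)
    rw [List.flatten_cons, List.append_eq_append_iff] at h
    rcases h with ⟨a, h1, h2⟩ | ⟨c, h1, h2⟩
    · exact ⟨[], u, a, S.flatten, rfl, Language.nil_mem_kstar _, h1 ▸ hw,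
        Language.join_mem_kstar hS', h2⟩
    · by_cases hc : c = []
      · subst hc
        refine ⟨[], u, [], z, rfl, Language.nil_mem_kstar _, ?_, ?_, rfl⟩
        · simpa [h1] using hw
        · simp only [List.nil_append] at h2
          rw [← h2]; exact Language.join_mem_kstar hS'
      · obtain ⟨x, y, z1, z2, e1, e2, e3, e4, e5⟩ := ih hS' c hc h2.symm
        refine ⟨w ++ x, y, z1, z2, by rw [h1, e1, List.append_assoc], ?_, e3, e4, e5⟩
        obtain ⟨T, rfl, hT⟩ := Language.mem_kstar.1 e2
        refine Language.mem_kstar.2 ⟨w :: T, by simp, ?_⟩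
        intro y hy
        rcases List.mem_cons.1 hy with rfl | hy
        · exact hw
        · exact hT _ hy

lemma kstar_append {W : Language X} {x y : List X} (hx : x ∈ W∗) (hy : y ∈ W∗) :
    x ++ y ∈ W∗ := by
  obtain ⟨S, rfl, hS⟩ := Language.mem_kstar.1 hx
  obtain ⟨T, rfl, hT⟩ := Language.mem_kstar.1 hy
  refine Language.mem_kstar.2 ⟨S ++ T, by simp, ?_⟩
  intro y hy
  rcases List.mem_append.1 hy with hy | hy
  · exact hS _ hy
  · exact hT _ hy

lemma mem_kstar_self {W : Language X} {x : List X} (hx : x ∈ W) : x ∈ W∗ :=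
  Language.mem_kstar.2 ⟨[x], by simp, by simpa using hx⟩

/-- union of a family of languages -/
def bigU (T : Set (Language X)) : Language X := {z | ∃ K ∈ T, z ∈ K}

lemma mem_bigU {T : Set (Language X)} {z : List X} : z ∈ bigU T ↔ ∃ K ∈ T, z ∈ K := Iff.rfl

lemma lq_finite {W : Language X} (h : IsRegLang W) : (Set.range W.leftQuotient).Finite := by
  induction h with
  | finite W hW =>
    have hs : {s : List X | ∃ w ∈ W, s <:+ w}.Finite := by
      refine (hW.biUnion (t := fun w => {s | s ∈ w.tails}) fun w _ => List.finite_toSet _).subset ?_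
      rintro s ⟨w, hw, hs⟩
      exact Set.mem_biUnion (show w ∈ (W : Set (List X)) from hw)
        (by simpa [List.mem_tails] using hs)
    refine hs.finite_subsets.subset ?_
    rintro _ ⟨u, rfl⟩
    intro s hsu
    exact ⟨u ++ s, hsu, List.suffix_append _ _⟩
  | union W V _ _ h1 h2 =>
    refine (Set.Finite.image2 (fun a b : Language X => a + b) h1 h2).subset ?_
    rintro _ ⟨u, rfl⟩
    exact ⟨_, ⟨u, rfl⟩, _, ⟨u, rfl⟩, rfl⟩
  | concat W V _ _ h1 h2 =>
    refine (Set.Finite.image2 (fun (a : Language X) (T : Set (Language X)) => a * V + bigU T)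
      h1 h2.finite_subsets).subset ?_
    rintro _ ⟨u, rfl⟩
    refine ⟨_, ⟨u, rfl⟩, {K | ∃ x y, u = x ++ y ∧ x ∈ W ∧ K = V.leftQuotient y}, ?_, ?_⟩
    · rintro K ⟨x, y, -, -, rfl⟩
      exact ⟨y, rfl⟩
    · apply Language.ext
      intro z
      simp only [Language.mem_add, Language.mem_mul, Language.mem_leftQuotient, mem_bigU]
      constructor
      · rintro (⟨a, ha, b, hb, rfl⟩ | ⟨_, ⟨x, y, rfl, hx, rfl⟩, hz⟩)
        · exact ⟨u ++ a, ha, b, hb, by simp⟩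
        · exact ⟨x, hx, y ++ z, hz, by simp⟩
      · rintro ⟨a, ha, b, hb, hab⟩
        rw [List.append_eq_append_iff] at hab
        rcases hab with ⟨c, h1, h2⟩ | ⟨c, h1, h2⟩
        · right
          refine ⟨_, ⟨a, c, h1, ha, rfl⟩, ?_⟩
          rw [Language.mem_leftQuotient, ← h2]; exact hb
        · left
          exact ⟨c, h1 ▸ ha, b, hb, h2.symm⟩
  | star W _ h1 =>
    refine ((h1.finite_subsets.image fun T => bigU T * W∗).insert (W∗)).subset ?_
    rintro _ ⟨u, rfl⟩
    by_cases hu : u = []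
    · subst hu; left; rfl
    right
    refine ⟨{K | ∃ x y, u = x ++ y ∧ x ∈ W∗ ∧ K = W.leftQuotient y}, ?_, ?_⟩
    · rintro K ⟨x, y, -, -, rfl⟩
      exact ⟨y, rfl⟩
    · apply Language.ext
      intro z
      simp only [Language.mem_mul, Language.mem_leftQuotient, mem_bigU]
      constructor
      · rintro ⟨a, ⟨_, ⟨x, y, rfl, hx, rfl⟩, ha⟩, b, hb, rfl⟩
        have := kstar_append hx (kstar_append (mem_kstar_self ha) hb)
        simpa using this
      · intro h
        obtain ⟨S, hS, hS'⟩ := Language.mem_kstar.1 h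
        obtain ⟨x, y, z1, z2, e1, e2, e3, e4, e5⟩ := lq_star_aux S hS' u z hu hS
        exact ⟨z1, ⟨_, ⟨x, y, e1, e2, rfl⟩, e3⟩, z2, e4, e5.symm⟩

lemma uniform_word (L : Language X) (hL : (Set.range L.leftQuotient).Finite) (P : List X → Prop)
    (mono : ∀ u t, P u → P (u ++ t))
    (H : ∀ u, ∃ t, ∀ u', L.leftQuotient u' = L.leftQuotient u → P (u' ++ t)) :
    ∃ w, ∀ u, P (u ++ w) := by
  have key : ∀ s : Set (Language X), s.Finite → ∃ w, ∀ u, L.leftQuotient u ∈ s → P (u ++ w) := by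
    intro s hs
    induction s, hs using Set.Finite.induction_on with
    | empty => exact ⟨[], fun u hu => absurd hu (Set.notMem_empty _)⟩
    | @insert a s _ _ ih =>
      obtain ⟨w, hw⟩ := ih
      by_cases h0 : ∃ u0, L.leftQuotient u0 = a
      · obtain ⟨u0, rfl⟩ := h0
        obtain ⟨t, ht⟩ := H (u0 ++ w)
        refine ⟨w ++ t, fun u hu => ?_⟩
        rw [← List.append_assoc]
        rcases hu with hu | hu
        · apply ht
          rw [Language.leftQuotient_append, Language.leftQuotient_append, hu]
        · exact mono _ _ (hw u hu)
      · refine ⟨w, fun u hu => ?_⟩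
        rcases hu with hu | hu
        · exact absurd ⟨u, hu⟩ h0
        · exact hw u hu
  obtain ⟨w, hw⟩ := key _ hL
  exact ⟨w, fun u => hw u ⟨u, rfl⟩⟩

/-! Topology -/

lemma isOpen_cyl (u : List X) : @IsOpen _ (cantorTop X) (cyl u) := by
  let : TopologicalSpace X := ⊥
  have : DiscreteTopology X := ⟨rfl⟩
  show IsOpen (cyl u)
  rw [isOpen_iff_mem_nhds]
  intro ξ hξ
  refine Filter.mem_of_superset
    ((PiNat.isOpen_cylinder (fun _ => X) ξ u.length).mem_nhds (PiNat.self_mem_cylinder _ _)) ?_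
  intro η hη
  obtain ⟨ζ, rfl⟩ := hξ
  obtain ⟨t, θ, ht, rfl⟩ := exists_split u.length η
  have : t = u := by
    apply List.ext_getElem ht
    intro i h1 h2
    have e1 := Stream'.get_append_left i t θ h1
    have e2 := Stream'.get_append_left i u ζ h2
    rw [← e1, ← e2]
    exact hη i h2
  rw [this]
  exact wcat_mem_cyl _ _

lemma exists_cyl_subset {U : Set (ℕ → X)} (hU : @IsOpen _ (cantorTop X) U) {ξ : ℕ → X}
    (hξ : ξ ∈ U) : ∃ u, ξ ∈ cyl u ∧ cyl u ⊆ U := by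
  let : TopologicalSpace X := ⊥
  have : DiscreteTopology X := ⟨rfl⟩
  obtain ⟨_, ⟨η, n, rfl⟩, h1, h2⟩ :=
    (PiNat.isTopologicalBasis_cylinders (fun _ => X)).exists_subset_of_mem_open hξ hU
  obtain ⟨u, ζ, hu, e⟩ := exists_split n ξ
  refine ⟨u, ⟨ζ, e⟩, fun x hx => h2 ?_⟩
  obtain ⟨y, rfl⟩ := hx
  rw [← PiNat.mem_cylinder_iff_eq.1 h1]
  intro i hi
  rw [e]
  have := Stream'.get_append_left i u y (by omega)
  have h' := Stream'.get_append_left i u ζ (by omega)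
  exact this.trans h'.symm

/-- combinatorial nowhere density -/
def ND (A : Set (ℕ → X)) : Prop := ∀ u, ∃ t, ∀ ξ ∈ A, ξ ∉ cyl (u ++ t)

lemma ND.wcat {A : Set (ℕ → X)} [Nonempty X] (h : ND A) (w : List X) : ND (wcat w '' A) := by
  intro u
  let x0 : X := Classical.arbitrary X
  let u' := u ++ List.replicate w.length x0
  by_cases hw : ∃ s, u' = w ++ s
  · obtain ⟨s, hs⟩ := hw
    obtain ⟨t, ht⟩ := h s
    refine ⟨List.replicate w.length x0 ++ t, ?_⟩
    rintro _ ⟨η, hη, rfl⟩ hc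
    rw [← List.append_assoc, show u ++ List.replicate w.length x0 = w ++ s from hs,
      List.append_assoc, wcat_mem_cyl_append] at hc
    exact ht η hη hc
  · refine ⟨List.replicate w.length x0, ?_⟩
    rintro _ ⟨η, hη, rfl⟩ hc
    have hl : w.length ≤ (u ++ List.replicate w.length x0).length := by
      rw [List.length_append, List.length_replicate]; omega
    exact hw (cyl_prefix (wcat_mem_cyl w η) hc hl)

lemma ND.meagre {A : Set (ℕ → X)} [Nonempty X] (h : ND A) : @IsMeagre _ (cantorTop X) A := by
  let := cantorTop X
  apply IsNowhereDense.isMeagre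
  rw [IsNowhereDense, Set.eq_empty_iff_forall_notMem]
  intro ξ hξ
  obtain ⟨u, -, hu⟩ := exists_cyl_subset isOpen_interior hξ
  obtain ⟨t, ht⟩ := h u
  have hm : AutoBaire.wcat (u ++ t) (fun _ => Classical.arbitrary X) ∈ closure A :=
    interior_subset (hu (cyl_append (wcat_mem_cyl _ _)))
  obtain ⟨η, h1, h2⟩ := mem_closure_iff.1 hm _ (isOpen_cyl (u ++ t)) (wcat_mem_cyl _ _)
  exact ht η h2 h1

lemma catOmega_meagre [Finite X] [Nonempty X] (W : Language X) {A : Set (ℕ → X)} (h : ND A) :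
    @IsMeagre _ (cantorTop X) (catOmega W A) := by
  let := cantorTop X
  have : catOmega W A ⊆ ⋃ w : List X, wcat w '' A := by
    rintro _ ⟨w, -, η, hη, rfl⟩
    exact Set.mem_iUnion.2 ⟨w, η, hη, rfl⟩
  exact (isMeagre_iUnion fun w => (h.wcat w).meagre).mono this

/-! Regular building blocks -/

/-- words of length one -/
def Let (X : Type) : Language X := {l | l.length = 1}

lemma reg_Let [Finite X] : IsRegLang (Let X) := .finite _ (List.finite_length_eq X 1)

lemma mem_Let_star (l : List X) : l ∈ (Let X)∗ := by
  refine Language.mem_kstar.2 ⟨l.map fun a => [a], ?_, ?_⟩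
  · induction l with
    | nil => rfl
    | cons a l ih => simp [← ih]
  · intro y hy
    obtain ⟨a, -, rfl⟩ := List.mem_map.1 hy
    rfl

lemma omegaPow_Let : omegaPow (Let X) = Set.univ := by
  refine Set.eq_univ_of_forall fun ξ => omegaPow_coind _ (fun _ => True) ?_ ξ trivial
  intro ξ _
  obtain ⟨u, η, h1, h2⟩ := exists_split 1 ξ
  exact ⟨u, h1, by rintro rfl; simp at h1, η, h2, trivial⟩

/-- words of the length of `w` other than `w` -/
def Avoid (w : List X) : Language X := {l | l.length = w.length ∧ l ≠ w}

lemma reg_Avoid [Finite X] (w : List X) : IsRegLang (Avoid w) :=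
  .finite _ ((List.finite_length_eq X w.length).subset fun _ h => h.1)

lemma nd_Avoid [Nonempty X] {w : List X} (hw : w ≠ []) : ND (omegaPow (Avoid w)) := by
  intro u
  let x0 : X := Classical.arbitrary X
  have hpos := List.length_pos_iff.2 hw
  have hle : u.length ≤ u.length * w.length := Nat.le_mul_of_pos_right _ hpos
  refine ⟨List.replicate (u.length * w.length - u.length) x0 ++ w, ?_⟩
  rintro ξ ⟨f, hf, hc⟩ hξ
  have hlen : ∀ k, (((List.range k).map f).flatten).length = k * w.length := by
    intro k
    induction k with
    | zero => simp
    | succ k ih =>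
      rw [List.range_succ, List.map_append, List.flatten_append, List.length_append, ih]
      simp [(hf k).1.1, Nat.succ_mul]
  rw [← List.append_assoc] at hξ
  have hc' := hc (u.length + 1)
  have hl := hlen (u.length + 1)
  obtain ⟨s, hs⟩ := cyl_prefix hξ hc' (by
    rw [hl, Nat.succ_mul]; simp; omega)
  rw [List.range_succ, List.map_append, List.flatten_append] at hs
  simp only [List.map_cons, List.map_nil, List.flatten_cons, List.flatten_nil,
    List.append_nil] at hs
  rw [List.append_assoc] at hs
  have h2 := (List.append_inj hs (by rw [hlen]; simp; omega)).2
  have h3 := (List.append_inj (t₁ := []) (by simpa using h2) (hf _).1.1).1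
  exact (hf _).1.2 h3

/-- `w` occurs infinitely often -/
def Inf (w : List X) (ξ : ℕ → X) : Prop := ∀ n, ∃ u, n ≤ u.length ∧ ξ ∈ cyl (u ++ w)

lemma Inf.cons {w x : List X} {ξ : ℕ → X} (h : Inf w ξ) : Inf w (wcat x ξ) := by
  intro n
  obtain ⟨u, h1, h2⟩ := h n
  refine ⟨x ++ u, by simp; omega, ?_⟩
  rw [List.append_assoc, wcat_mem_cyl_append]
  exact h2

lemma Inf.uncons {w x : List X} {ξ : ℕ → X} (h : Inf w (wcat x ξ)) : Inf w ξ := by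
  intro n
  obtain ⟨u, h1, h2⟩ := h (n + x.length)
  obtain ⟨s, rfl⟩ := cyl_prefix (wcat_mem_cyl x ξ) (cyl_append h2) (by omega)
  rw [List.append_assoc, wcat_mem_cyl_append] at h2
  exact ⟨s, by simp at h1; omega, h2⟩

lemma not_inf {w : List X} (hw : w ≠ []) {ξ : ℕ → X} (h : ¬ Inf w ξ) :
    ξ ∈ catOmega ((Let X)∗) (omegaPow (Avoid w)) := by
  simp only [Inf, not_forall, not_exists, not_and] at h
  obtain ⟨n, hn⟩ := h
  obtain ⟨x, η, hx, rfl⟩ := exists_split n ξ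
  refine ⟨x, mem_Let_star x, η, ?_, rfl⟩
  refine omegaPow_coind _ (fun η => ∀ u, η ∉ cyl (u ++ w)) ?_ η ?_
  · intro ζ hζ
    obtain ⟨v, ζ', hv, rfl⟩ := exists_split w.length ζ
    refine ⟨v, ⟨hv, ?_⟩, ?_, ζ', rfl, ?_⟩
    · rintro rfl
      exact hζ [] (wcat_mem_cyl _ _)
    · rintro rfl
      exact hw (List.length_eq_zero_iff.1 hv.symm)
    · intro u hu
      apply hζ (v ++ u)
      rw [List.append_assoc, wcat_mem_cyl_append]
      exact hu
  · intro u hu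
    apply hn (x ++ u) (by simp; omega)
    rw [List.append_assoc, wcat_mem_cyl_append]
    exact hu

lemma IsRegOmega.single {W V : Language X} (hW : IsRegLang W) (hV : IsRegLang V) :
    IsRegOmega (catOmega W (omegaPow V)) :=
  ⟨1, fun _ => W, fun _ => V, fun _ => ⟨hW, hV⟩, by rw [Set.iUnion_const]⟩

lemma IsRegOmega.empty : IsRegOmega (∅ : Set (ℕ → X)) :=
  ⟨0, fun _ => 0, fun _ => 0, fun i => i.elim0, by simp⟩

lemma IsRegOmega.union {A B : Set (ℕ → X)} (hA : IsRegOmega A) (hB : IsRegOmega B) :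
    IsRegOmega (A ∪ B) := by
  obtain ⟨n, W, V, h, rfl⟩ := hA
  obtain ⟨m, W', V', h', rfl⟩ := hB
  refine ⟨n + m, Fin.append W W', Fin.append V V', ?_, ?_⟩
  · intro i
    refine Fin.addCases (fun i => ?_) (fun i => ?_) i
    · simpa using h i
    · simpa using h' i
  · ext ξ
    simp only [Set.mem_union, Set.mem_iUnion]
    constructor
    · rintro (⟨i, hi⟩ | ⟨i, hi⟩)
      · exact ⟨Fin.castAdd m i, by simpa using hi⟩
      · exact ⟨Fin.natAdd n i, by simpa using hi⟩
    · rintro ⟨i, hi⟩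
      revert hi
      refine Fin.addCases (fun i => ?_) (fun i => ?_) i
      · intro hi; exact Or.inl ⟨i, by simpa using hi⟩
      · intro hi; exact Or.inr ⟨i, by simpa using hi⟩

lemma HasABP.empty : HasABP (∅ : Set (ℕ → X)) := by
  let := cantorTop X
  exact ⟨∅, ∅, .empty, isOpen_empty, .empty, IsMeagre.empty, by simp⟩

lemma HasABP.union {A B : Set (ℕ → X)} (hA : HasABP A) (hB : HasABP B) : HasABP (A ∪ B) := by
  let := cantorTop X
  obtain ⟨E, N, h1, h2, h3, h4, h5⟩ := hA
  obtain ⟨E', N', h1', h2', h3', h4', h5'⟩ := hB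
  refine ⟨E ∪ E', N ∪ N', h1.union h1', IsOpen.union h2 h2', h3.union h3',
    IsMeagre.union h4 h4', ?_⟩
  intro ξ hξ
  have a := @h5 ξ
  have b := @h5' ξ
  simp only [Set.mem_symmDiff, Set.mem_union] at *
  tauto

lemma HasABP.iUnion (n : ℕ) (A : Fin n → Set (ℕ → X)) (h : ∀ i, HasABP (A i)) :
    HasABP (⋃ i, A i) := by
  induction n with
  | zero => simpa using HasABP.empty
  | succ n ih =>
    have : (⋃ i, A i) = A 0 ∪ ⋃ i : Fin n, A i.succ := by
      ext ξ
      simp [Fin.exists_fin_succ]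
    rw [this]
    exact (h 0).union (ih _ fun i => h _)

lemma main_word [Nonempty X] {V : Language X} (hV : IsRegLang V) {u1 : List X}
    (hu1 : ∀ t, ∃ ξ ∈ omegaPow V, ξ ∈ cyl (u1 ++ t)) :
    ∃ w : List X, w ≠ [] ∧ ∀ ξ, Inf w ξ →
      (ξ ∈ omegaPow V ↔ ∃ x ∈ V∗, ξ ∈ cyl (x ++ u1)) := by
  let P : List X → Prop := fun u => (∀ ξ ∈ omegaPow V, ξ ∉ cyl u) ∨
    ∃ x ∈ V∗, x ≠ [] ∧ ∃ s, u = x ++ u1 ++ s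
  have mono : ∀ u t, P u → P (u ++ t) := by
    rintro u t (h | ⟨x, hx, h0, s, rfl⟩)
    · exact Or.inl fun ξ hξ hc => h ξ hξ (cyl_append hc)
    · exact Or.inr ⟨x, hx, h0, s ++ t, by simp⟩
  obtain ⟨w, hw⟩ := uniform_word (V∗) (lq_finite (.star V hV)) P mono (by
    intro u
    by_cases hz : ∃ z, z ≠ [] ∧ z ∈ (V∗).leftQuotient u
    · obtain ⟨z, hz0, hz⟩ := hz
      refine ⟨z ++ u1, fun u' hu' => Or.inr ⟨u' ++ z, ?_, by simp [hz0], [], by simp⟩⟩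
      rw [← hu'] at hz
      exact hz
    · refine ⟨[], fun u' hu' => Or.inl fun ξ hξ hc => hz ?_⟩
      rw [List.append_nil] at hc
      obtain ⟨z, hz0, hz⟩ := omegaPow_prefix hξ hc
      exact ⟨z, hz0, hu' ▸ hz⟩)
  refine ⟨w ++ [Classical.arbitrary X], by simp, ?_⟩
  generalize hw' : w ++ [Classical.arbitrary X] = w'
  have hP : ∀ u, P (u ++ w') := by
    intro u
    rw [← hw', ← List.append_assoc]
    exact mono _ _ (hw u)
  intro ξ hξ
  constructor
  · intro hA
    obtain ⟨u, -, hu⟩ := hξ 0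
    rcases hP u with h | ⟨x, hx, -, s, hs⟩
    · exact absurd hu (h ξ hA)
    · rw [hs] at hu
      exact ⟨x, hx, cyl_append hu⟩
  · intro hE
    refine omegaPow_coind V (fun ξ => Inf w' ξ ∧ ∃ x ∈ V∗, ξ ∈ cyl (x ++ u1)) ?_ ξ ⟨hξ, hE⟩
    rintro ξ ⟨hξ, x, hx, hc⟩
    obtain ⟨u, -, hu⟩ := hξ 0
    rcases hP u with h | ⟨y, hy, hy0, s, hs⟩
    · exfalso
      obtain ⟨η, rfl⟩ := hc
      obtain ⟨t, ζ, ht, rfl⟩ := exists_split (u ++ w').length η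
      obtain ⟨θ, hθ, hθc⟩ := hu1 t
      have h1 : wcat x θ ∈ cyl (x ++ (u1 ++ t)) := (wcat_mem_cyl_append _ _ _).2 hθc
      have h2 : wcat (x ++ u1) (wcat t ζ) ∈ cyl (x ++ (u1 ++ t)) := by
        rw [← List.append_assoc, wcat_mem_cyl_append]
        exact wcat_mem_cyl _ _
      obtain ⟨r, hr⟩ := cyl_prefix hu h2 (by simp at ht ⊢; omega)
      rw [hr] at h1
      exact h _ (omegaPow_kstar hx hθ) (cyl_append h1)
    · obtain ⟨v, hv, hv0, y', hy', rfl⟩ := kstar_uncons hy hy0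
      rw [hs] at hu
      have hu' := cyl_append hu
      obtain ⟨η, rfl⟩ := hu'
      rw [List.append_assoc, wcat_append] at hξ ⊢
      exact ⟨v, hv, hv0, _, rfl, hξ.uncons, y', hy', wcat_mem_cyl _ _⟩

/-- the singleton language -/
def Sing (u : List X) : Language X := {l | l = u}

lemma reg_Sing (u : List X) : IsRegLang (Sing u) := .finite _ (Set.finite_singleton u)

lemma abp_single [Finite X] [Nonempty X] {W V : Language X} (hW : IsRegLang W)
    (hV : IsRegLang V) : HasABP (catOmega W (omegaPow V)) := by
  let := cantorTop X
  by_cases h : ND (omegaPow V)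
  · exact ⟨∅, _, .empty, isOpen_empty, .single hW hV, catOmega_meagre W h,
      by simp [symmDiff_def]⟩
  simp only [ND, not_forall, not_exists, not_not] at h
  obtain ⟨u1, hu1⟩ := h
  obtain ⟨w, hw0, hw⟩ := main_word hV (u1 := u1) (fun t => by
    obtain ⟨ξ, h1, h2⟩ := hu1 t
    exact ⟨ξ, h1, h2⟩)
  refine ⟨catOmega (W * (V∗ * Sing u1)) (omegaPow (Let X)), _,
    .single (.concat _ _ hW (.concat _ _ (.star _ hV) (reg_Sing u1)))
      reg_Let, ?_, .single (.star _ reg_Let) (reg_Avoid w), catOmega_meagre _ (nd_Avoid hw0), ?_⟩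
  · have : catOmega (W * (V∗ * Sing u1)) (omegaPow (Let X)) =
        ⋃ x ∈ (W * (V∗ * Sing u1) : Language X), cyl x := by
      rw [omegaPow_Let]
      ext ξ
      simp only [catOmega, Set.mem_ofPred_eq, Set.mem_iUnion, cyl, Set.mem_univ, true_and,
        exists_prop]
    rw [this]
    exact isOpen_biUnion fun x _ => isOpen_cyl x
  · intro ξ hξ
    apply not_inf hw0
    intro hI
    rw [omegaPow_Let] at hξ
    rcases hξ with ⟨⟨x, hx, η, hη, rfl⟩, hn⟩ | ⟨⟨_, hx, η, -, rfl⟩, hn⟩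
    · obtain ⟨y, hy, ζ, rfl⟩ := (hw η hI.uncons).1 hη
      apply hn
      exact ⟨x ++ (y ++ u1), Language.append_mem_mul hx (Language.append_mem_mul hy rfl), ζ,
        trivial, (wcat_append _ _ _).symm⟩
    · obtain ⟨a, ha, b, hb, rfl⟩ := Language.mem_mul.1 hx
      obtain ⟨c, hc, d, hd, rfl⟩ := Language.mem_mul.1 hb
      obtain rfl : d = u1 := hd
      rw [wcat_append] at hI hn
      exact hn ⟨a, ha, _, (hw _ hI.uncons).2 ⟨c, hc, wcat_mem_cyl _ _⟩, rfl⟩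

end helpers

theorem stmt9 {X : Type} [Fintype X] (hX : 2 ≤ Fintype.card X)
    (F : Set (ℕ → X)) (hreg : IsRegOmega F) :
    HasABP F := by
  haveI : Nonempty X := Fintype.card_pos_iff.1 (by omega)
  obtain ⟨n, W, V, h, rfl⟩ := hreg
  exact HasABP.iUnion n _ fun i => abp_single (h i).1 (h i).2

end AutoBaire
end

section
/- Let F ⊆ X^ω be of first Baire category. Then F has the Automatic Baire property if and only if F ⊆ F' for some regular ω-language F' of first Baire category. -/
open Set MeasureTheory Computability

namespace AutoBaire

variable {X : Type}

theorem stmt12 {X : Type} [Fintype X] (hX : 2 ≤ Fintype.card X)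
    (F : Set (ℕ → X)) (hm : @IsMeagre _ (cantorTop X) F) :
    HasABP F ↔
      ∃ F' : Set (ℕ → X), IsRegOmega F' ∧ @IsMeagre _ (cantorTop X) F' ∧ F ⊆ F' := by
  letI : TopologicalSpace X := ⊥
  haveI : DiscreteTopology X := ⟨rfl⟩
  letI : TopologicalSpace (ℕ → X) := Pi.topologicalSpace
  constructor
  · rintro ⟨E, F', hE, hEo, hF', hF'm, hsub⟩
    refine ⟨F', hF', hF'm, ?_⟩
    have hEm : IsMeagre E := by
      refine IsMeagre.mono ?_ (IsMeagre.union (s := F) (t := F') hm hF'm)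
      intro x hx
      by_cases h : x ∈ F
      · exact Or.inl h
      · exact Or.inr (hsub (Or.inr ⟨hx, h⟩))
    have hempty : E = ∅ := by
      by_contra hne
      exact not_isMeagre_of_isOpen (s := E) hEo (Set.nonempty_iff_ne_empty.mpr hne) hEm
    intro x hx
    refine hsub (Or.inl ⟨hx, ?_⟩)
    rw [hempty]
    exact Set.notMem_empty x
  · rintro ⟨F', hF', hF'm, hsub⟩
    refine ⟨∅, F', ⟨0, fun _ => 0, fun _ => 0, fun i => i.elim0, ?_⟩, @isOpen_empty _ (cantorTop X), hF', hF'm, ?_⟩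
    · simp
    · rintro x (⟨hx, -⟩ | ⟨hx, -⟩)
      · exact hsub hx
      · exact absurd hx (Set.notMem_empty x)


end AutoBaire
end
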